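/- Let Θ = (θ - θ(0))/(1 - conj(θ(0))θ) be the Frostman shift of an inner function θ. Then Θ is inner, Θ(0) = 0, and the map J : f ↦ (√(1-|θ(0)|²)/(1 - conj(θ(0))θ)) f is a unitary operator from K_θ onto K_Θ satisfying J k_λ = ((1 - θ(0)conj(θ(λ)))/√(1-|θ(0)|²)) k_λ^Θ for every λ ∈ 𝔻, where k_λ^Θ is the reproducing kernel of K_Θ. -/

import Mathlib

open MeasureTheory Complex ComplexConjugate AddCircle

noncomputable section

/-- The Hardy space `H²` inside `L²` of the circle: classes whose Fourier coefficients of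
negative index vanish. -/
def hardySpace (T : ℝ) [hT : Fact (0 < T)] :
    Submodule ℂ (Lp ℂ 2 (@haarAddCircle T hT)) where
  carrier := {f | ∀ n : ℤ, n < 0 → fourierBasis.repr f n = 0}
  add_mem' := by
    intro f g hf hg n hn
    simp [map_add, hf n hn, hg n hn]
  zero_mem' := by intro n hn; simp
  smul_mem' := by
    intro c f hf n hn
    simp [_root_.map_smul, hf n hn]

/-- The subspace `θH²` of `L²` of the circle. -/
def thetaH2 (T : ℝ) [hT : Fact (0 < T)] (θ : Lp ℂ 2 (@haarAddCircle T hT)) :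
    Submodule ℂ (Lp ℂ 2 (@haarAddCircle T hT)) where
  carrier := {g | ∃ f ∈ hardySpace T, (g : AddCircle T → ℂ) =ᵐ[haarAddCircle]
    fun x => (θ : AddCircle T → ℂ) x * (f : AddCircle T → ℂ) x}
  add_mem' := by
    rintro g1 g2 ⟨f1, hf1, e1⟩ ⟨f2, hf2, e2⟩
    refine ⟨f1 + f2, add_mem hf1 hf2, ?_⟩
    filter_upwards [Lp.coeFn_add g1 g2, Lp.coeFn_add f1 f2, e1, e2] with x h1 h2 h3 h4
    simp only [Pi.add_apply, h1, h2, h3, h4]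
    ring
  zero_mem' := by
    refine ⟨0, zero_mem _, ?_⟩
    filter_upwards [Lp.coeFn_zero ℂ 2 (@haarAddCircle T hT)] with x hx
    simp [hx]
  smul_mem' := by
    rintro c g ⟨f, hf, e⟩
    refine ⟨c • f, Submodule.smul_mem _ c hf, ?_⟩
    filter_upwards [Lp.coeFn_smul c g, Lp.coeFn_smul c f, e] with x h1 h2 h3
    simp only [Pi.smul_apply, h1, h2, h3, smul_eq_mul]
    ring

/-- The model space `K_θ = H² ⊖ θH²`. -/
def modelSpace (T : ℝ) [hT : Fact (0 < T)] (θ : Lp ℂ 2 (@haarAddCircle T hT)) :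
    Submodule ℂ (Lp ℂ 2 (@haarAddCircle T hT)) :=
  hardySpace T ⊓ (thetaH2 T θ)ᗮ

/-- The analytic extension of an element of `H²` to the disk, via its Taylor/Fourier series. -/
def extDisk (T : ℝ) [hT : Fact (0 < T)] (f : Lp ℂ 2 (@haarAddCircle T hT)) (z : ℂ) : ℂ :=
  ∑' n : ℕ, fourierBasis.repr f (n : ℤ) * z ^ n

/-- `θ` is an inner function: it belongs to `H²` and has unimodular boundary values a.e. -/
def IsInner (T : ℝ) [hT : Fact (0 < T)] (θ : Lp ℂ 2 (@haarAddCircle T hT)) : Prop :=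
  θ ∈ hardySpace T ∧ ∀ᵐ x ∂(@haarAddCircle T hT), ‖(θ : AddCircle T → ℂ) x‖ = 1

/-!
Write `M` for multiplication by `θ` on `L²`, an isometry mapping `H²` into itself, and
`D = 1 - conj a • M` with `|a| < 1`. By the Neumann series `D` is a bijection of `L²` that maps `H²`
onto itself, and `J` is `√(1 - |a|²)` times the inverse of `D`. Since `M` is an isometry,
`⟪M h, D u⟫ = ⟪(M - a) h, u⟫`, and `(M - a) h = Θ * D h`; so `D u ⊥ θH²` if and only if
`u ⊥ ΘH²`, that is, `D` maps `K_Θ` onto `K_θ`. For `D u ∈ K_θ` the vectors `D u` and `M u` are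
orthogonal, and Pythagoras applied to `u = D u + conj a • M u` gives
`‖D u‖² = (1 - |a|²) ‖u‖²`. The value of `Θ` at a point of the disk comes from `D Θ = θ - a` by
multiplicativity of evaluation on `H²`, and the formula for the kernels is then the Möbius identity
`one_sub_conj_frostmanMap_mul_frostmanMap`.
-/

section NeumannSeries

variable {𝕜 E : Type*} [NontriviallyNormedField 𝕜] [NormedAddCommGroup E] [NormedSpace 𝕜 E]

theorem norm_smul_linearIsometry_lt_one (M : E →ₗᵢ[𝕜] E) {b : 𝕜} (hb : ‖b‖ < 1) :
    ‖b • M.toContinuousLinearMap‖ < 1 :=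
  calc ‖b • M.toContinuousLinearMap‖ = ‖b‖ * ‖M.toContinuousLinearMap‖ := norm_smul _ _
    _ ≤ ‖b‖ := mul_le_of_le_one_right (norm_nonneg b) M.norm_toContinuousLinearMap_le
    _ < 1 := hb

variable [CompleteSpace E] {A : E →L[𝕜] E} {M : E →ₗᵢ[𝕜] E} {b : 𝕜}

theorem surjective_sub_apply_of_norm_lt_one (hA : ‖A‖ < 1) :
    Function.Surjective fun u => u - A u := fun f =>
  ⟨(∑' i : ℕ, A ^ i) f, congrArg (fun L : E →L[𝕜] E => L f) (mul_neg_geom_series A hA)⟩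

theorem mem_of_sub_apply_mem (hA : ‖A‖ < 1) {K : Submodule 𝕜 E} (hK : IsClosed (K : Set E))
    (hAK : ∀ f ∈ K, A f ∈ K) {u : E} (hu : u - A u ∈ K) : u ∈ K := by
  have hpow (i : ℕ) : (A ^ i) (u - A u) ∈ K := by
    induction i with
    | zero => simpa using hu
    | succ i ih =>
      rw [pow_succ']
      exact hAK _ ih
  have hsum : HasSum (fun i : ℕ => (A ^ i) (u - A u)) u := by
    have h := (summable_geometric_of_norm_lt_one hA).hasSum.mapL
      (ContinuousLinearMap.apply 𝕜 E (u - A u))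
    have hu' : (∑' i : ℕ, A ^ i) (u - A u) = u :=
      congrArg (fun L : E →L[𝕜] E => L u) (geom_series_mul_neg A hA)
    simpa only [ContinuousLinearMap.apply_apply, hu'] using h
  exact hK.mem_of_tendsto hsum (.of_forall fun s => K.sum_mem fun i _ => hpow i)

theorem exists_sub_smul_map_eq (M : E →ₗᵢ[𝕜] E) (hb : ‖b‖ < 1) (f : E) : ∃ u, u - b • M u = f :=
  surjective_sub_apply_of_norm_lt_one (norm_smul_linearIsometry_lt_one M hb) f

theorem sub_smul_map_mem_iff {K : Submodule 𝕜 E} (hK : IsClosed (K : Set E))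
    (hMK : ∀ f ∈ K, M f ∈ K) (hb : ‖b‖ < 1) {u : E} : u - b • M u ∈ K ↔ u ∈ K :=
  ⟨mem_of_sub_apply_mem (norm_smul_linearIsometry_lt_one M hb) hK
    fun f hf => K.smul_mem b (hMK f hf), fun hu => K.sub_mem hu (K.smul_mem b (hMK u hu))⟩

end NeumannSeries

section LinearIsometry

variable {𝕜 E : Type*} [RCLike 𝕜] [NormedAddCommGroup E] [InnerProductSpace 𝕜 E]
  (M : E →ₗᵢ[𝕜] E)

theorem inner_map_sub_smul_map (a : 𝕜) (h u : E) :
    inner 𝕜 (M h) (u - conj a • M u) = inner 𝕜 (M h - a • h) u := by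
  rw [inner_sub_right, inner_sub_left, inner_smul_right, inner_smul_left, M.inner_map_map]

theorem norm_sub_smul_map_of_inner_eq_zero {b : 𝕜} {u : E}
    (hu : inner 𝕜 (M u) (u - b • M u) = 0) :
    ‖u - b • M u‖ = Real.sqrt (1 - ‖b‖ ^ 2) * ‖u‖ := by
  have horth : inner 𝕜 (u - b • M u) (b • M u) = 0 := by
    rw [inner_smul_right, inner_eq_zero_symm.1 hu, mul_zero]
  have hpyth := norm_add_sq_eq_norm_sq_add_norm_sq_of_inner_eq_zero _ _ horth
  rw [sub_add_cancel, norm_smul, M.norm_map] at hpyth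
  calc ‖u - b • M u‖ = Real.sqrt (‖u - b • M u‖ ^ 2) := (Real.sqrt_sq (norm_nonneg _)).symm
    _ = Real.sqrt ((1 - ‖b‖ ^ 2) * ‖u‖ ^ 2) := by
      congr 1
      linear_combination -hpyth
    _ = Real.sqrt (1 - ‖b‖ ^ 2) * ‖u‖ := by
      rw [Real.sqrt_mul' _ (sq_nonneg _), Real.sqrt_sq (norm_nonneg u)]

variable {M} in
/-- Since `1 - conj a • M` maps `K` onto itself, the orthogonality conditions may be tested on
`M h` and on `N (h - conj a • M h)` for `h ∈ K`, where `inner_map_sub_smul_map` matches them. -/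
theorem sub_smul_map_mem_inf_orthogonal_iff [CompleteSpace E] {K : Submodule 𝕜 E}
    {N : E →ₗ[𝕜] E} {a : 𝕜}
    (hK : IsClosed (K : Set E)) (hMK : ∀ f ∈ K, M f ∈ K) (ha : ‖a‖ < 1)
    (hN : ∀ h, N (h - conj a • M h) = M h - a • h) {u : E} :
    u - conj a • M u ∈ K ⊓ (K.map M.toLinearMap)ᗮ ↔ u ∈ K ⊓ (K.map N)ᗮ := by
  have hmem {h : E} : h - conj a • M h ∈ K ↔ h ∈ K :=
    sub_smul_map_mem_iff hK hMK (by rwa [RCLike.norm_conj])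
  refine and_congr hmem ?_
  simp only [SetLike.mem_coe, Submodule.mem_orthogonal, Submodule.mem_map,
    forall_exists_index, and_imp, forall_apply_eq_imp_iff₂]
  constructor
  · intro horth g hg
    obtain ⟨h, rfl⟩ := exists_sub_smul_map_eq M (b := conj a) (by rwa [RCLike.norm_conj]) g
    rw [hN, ← inner_map_sub_smul_map]
    exact horth h (hmem.1 hg)
  · intro horth h hh
    refine (inner_map_sub_smul_map M a h u).trans ?_
    rw [← hN]
    exact horth _ (hmem.2 hh)

end LinearIsometry

section Multiplication

variable {α 𝕜 E : Type*} [MeasurableSpace α] {μ : Measure α} [NontriviallyNormedField 𝕜]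
  [NormedAddCommGroup E] [NormedSpace 𝕜 E] {p : ENNReal} [Fact (1 ≤ p)] {φ : α → 𝕜}

theorem memLp_top_of_norm_ae_eq_one {F : Type*} [NormedAddCommGroup F] {φ : α → F}
    (hφ : AEStronglyMeasurable φ μ) (hφ_norm : ∀ᵐ x ∂μ, ‖φ x‖ = 1) : MemLp φ ⊤ μ :=
  memLp_top_of_bound hφ 1 (hφ_norm.mono fun _ => le_of_eq)

/-- Multiplication by an a.e. unimodular function, as a linear isometry of `Lᵖ`. -/
def unimodularMul (hφ : AEStronglyMeasurable φ μ) (hφ_norm : ∀ᵐ x ∂μ, ‖φ x‖ = 1) :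
    Lp E p μ →ₗᵢ[𝕜] Lp E p μ where
  toLinearMap := (ContinuousLinearMap.lsmul 𝕜 𝕜).holderₗ μ ⊤ p p
    ((memLp_top_of_norm_ae_eq_one hφ hφ_norm).toLp φ)
  norm_map' f := by
    have hφ_top := memLp_top_of_norm_ae_eq_one hφ hφ_norm
    rw [Lp.norm_def, Lp.norm_def]
    congr 1
    refine eLpNorm_congr_norm_ae ?_
    filter_upwards [(ContinuousLinearMap.lsmul 𝕜 𝕜).coeFn_holder (r := p) (hφ_top.toLp φ) f,
      hφ_top.coeFn_toLp, hφ_norm] with x hx hφx hnorm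
    simp only [ContinuousLinearMap.holderₗ_apply_apply, hx, hφx, ContinuousLinearMap.lsmul_apply,
      norm_smul, hnorm, one_mul]

theorem coeFn_unimodularMul (hφ : AEStronglyMeasurable φ μ) (hφ_norm : ∀ᵐ x ∂μ, ‖φ x‖ = 1)
    (f : Lp E p μ) : unimodularMul hφ hφ_norm f =ᵐ[μ] fun x => φ x • f x := by
  have hφ_top := memLp_top_of_norm_ae_eq_one hφ hφ_norm
  filter_upwards [(ContinuousLinearMap.lsmul 𝕜 𝕜).coeFn_holder (r := p) (hφ_top.toLp φ) f,
    hφ_top.coeFn_toLp] with x hx hφx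
  exact hx.trans (by rw [hφx, ContinuousLinearMap.lsmul_apply])

end Multiplication

section Moebius

/-- The disk automorphism `w ↦ (w - a) / (1 - conj a * w)`; composing it with an inner function
gives the Frostman shift. -/
def frostmanMap (a w : ℂ) : ℂ := (w - a) / (1 - conj a * w)

variable {a t w : ℂ}

theorem one_sub_conj_mul_ne_zero (ha : ‖a‖ < 1) (hw : ‖w‖ = 1) : 1 - conj a * w ≠ 0 := by
  intro h
  have hnorm : ‖conj a * w‖ = 1 := by rw [← sub_eq_zero.1 h, norm_one]
  rw [norm_mul, RCLike.norm_conj, hw, mul_one] at hnorm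
  exact ha.ne hnorm

theorem one_sub_conj_frostmanMap_mul_frostmanMap (ht : 1 - conj a * t ≠ 0)
    (hw : 1 - conj a * w ≠ 0) :
    1 - conj (frostmanMap a t) * frostmanMap a w =
      (1 - a * conj a) * (1 - conj t * w) / ((1 - conj t * a) * (1 - conj a * w)) := by
  have ht' : 1 - conj t * a ≠ 0 := by simpa [mul_comm] using (map_ne_zero conj).2 ht
  simp only [frostmanMap, map_div₀, map_sub, map_mul, map_one, conj_conj]
  field_simp
  ring

theorem norm_frostmanMap_of_norm_eq_one (ha : ‖a‖ < 1) (hw : ‖w‖ = 1) : ‖frostmanMap a w‖ = 1 := by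
  have hD := one_sub_conj_mul_ne_zero ha hw
  have hw' : conj w * w = 1 := by rw [conj_mul', hw, ofReal_one, one_pow]
  have h := one_sub_conj_frostmanMap_mul_frostmanMap hD hD
  rw [hw', sub_self, mul_zero, zero_div, sub_eq_zero, conj_mul'] at h
  have hsq : ‖frostmanMap a w‖ ^ 2 = 1 := by exact_mod_cast h.symm
  exact (pow_eq_one_iff_of_nonneg (norm_nonneg _) two_ne_zero).1 hsq

theorem sq_sqrt_one_sub_norm_sq (ha : ‖a‖ < 1) :
    (Real.sqrt (1 - ‖a‖ ^ 2) : ℂ) ^ 2 = 1 - a * conj a := by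
  have h : 0 ≤ 1 - ‖a‖ ^ 2 := by nlinarith [norm_nonneg a]
  rw [mul_conj', ← ofReal_pow, Real.sq_sqrt h]
  push_cast
  rfl

theorem sqrt_one_sub_norm_sq_ne_zero (ha : ‖a‖ < 1) : (Real.sqrt (1 - ‖a‖ ^ 2) : ℂ) ≠ 0 := by
  have h : 0 < 1 - ‖a‖ ^ 2 := by nlinarith [norm_nonneg a]
  exact_mod_cast (Real.sqrt_pos.2 h).ne'

end Moebius

section HardySpace

variable {T : ℝ} [Fact (0 < T)] {f g h : Lp ℂ 2 (haarAddCircle (T := T))} {z : ℂ}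

theorem mem_hardySpace_iff : f ∈ hardySpace T ↔ ∀ n : ℤ, n < 0 → fourierCoeff f n = 0 := by
  simp only [← fourierBasis_repr]
  rfl

theorem isClosed_hardySpace : IsClosed (hardySpace T : Set (Lp ℂ 2 (haarAddCircle (T := T)))) := by
  have hset : (hardySpace T : Set (Lp ℂ 2 (haarAddCircle (T := T)))) =
      ⋂ (n : ℤ) (_ : n < 0), {f | inner ℂ (fourierBasis n) f = 0} := by
    ext f
    simp only [Set.mem_iInter, Set.mem_ofPred_eq, ← HilbertBasis.repr_apply_apply]
    rfl
  rw [hset]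
  exact isClosed_iInter fun n => isClosed_iInter fun _ => isClosed_eq (by fun_prop) (by fun_prop)

theorem fourierCoeff_fourierBasis (m n : ℤ) :
    fourierCoeff (fourierBasis (T := T) m) n = if n = m then 1 else 0 := by
  rw [← fourierBasis_repr, HilbertBasis.repr_apply_apply]
  exact orthonormal_iff_ite.1 fourierBasis.orthonormal n m

theorem fourierBasis_mem_hardySpace (m : ℕ) : fourierBasis (T := T) m ∈ hardySpace T := by
  rw [mem_hardySpace_iff]
  intro n hn
  rw [fourierCoeff_fourierBasis, if_neg (by lia)]

theorem coeFn_fourierBasis (n : ℤ) :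
    fourierBasis (T := T) n =ᵐ[haarAddCircle] fourier n := by
  rw [coe_fourierBasis]
  exact coeFn_fourierLp 2 n

theorem norm_fourierCoeff_le (f : Lp ℂ 2 (haarAddCircle (T := T))) (n : ℤ) :
    ‖fourierCoeff f n‖ ≤ ‖f‖ := by
  rw [← fourierBasis_repr, ← fourierBasis.repr.norm_map f]
  exact lp.norm_apply_le_norm two_ne_zero _ n

theorem extDisk_eq_tsum_fourierCoeff (f : Lp ℂ 2 (haarAddCircle (T := T))) (z : ℂ) :
    extDisk T f z = ∑' n : ℕ, fourierCoeff f n * z ^ n := by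
  simp only [extDisk, fourierBasis_repr]

theorem summable_norm_fourierCoeff_mul_pow (f : Lp ℂ 2 (haarAddCircle (T := T))) (hz : ‖z‖ < 1) :
    Summable fun n : ℕ => ‖fourierCoeff f n * z ^ n‖ := by
  refine .of_nonneg_of_le (fun _ => norm_nonneg _) (fun n => ?_)
    ((summable_geometric_of_lt_one (norm_nonneg z) hz).mul_left ‖f‖)
  rw [norm_mul, norm_pow]
  gcongr
  exact norm_fourierCoeff_le f n

theorem extDisk_sub (f g : Lp ℂ 2 (haarAddCircle (T := T))) (hz : ‖z‖ < 1) :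
    extDisk T (f - g) z = extDisk T f z - extDisk T g z := by
  have hf := (summable_norm_fourierCoeff_mul_pow f hz).of_norm
  have hg := (summable_norm_fourierCoeff_mul_pow g hz).of_norm
  simp only [← fourierBasis_repr] at hf hg
  simp only [extDisk, map_sub, lp.coeFn_sub, Pi.sub_apply, sub_mul, hf.tsum_sub hg]

theorem extDisk_smul (c : ℂ) (f : Lp ℂ 2 (haarAddCircle (T := T))) (z : ℂ) :
    extDisk T (c • f) z = c * extDisk T f z := by
  simp only [extDisk, map_smul, lp.coeFn_smul, Pi.smul_apply, smul_eq_mul, mul_assoc, tsum_mul_left]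

theorem extDisk_fourierBasis (m : ℕ) (z : ℂ) : extDisk T (fourierBasis (m : ℤ)) z = z ^ m := by
  simp only [extDisk_eq_tsum_fourierCoeff, fourierCoeff_fourierBasis, Nat.cast_inj, ite_mul,
    one_mul, zero_mul, tsum_ite_eq]

/-- Parseval's identity for `f` and `fourier n * conj g`. -/
theorem hasSum_fourierCoeff_mul_fourierCoeff (f g : Lp ℂ 2 (haarAddCircle (T := T))) (n : ℤ) :
    HasSum (fun i => fourierCoeff f i * fourierCoeff g (n - i))
      (fourierCoeff (fun x => f x * g x) n) := by
  let twist : Lp ℂ 2 (haarAddCircle (T := T)) →ₗᵢ[ℂ] Lp ℂ 2 (haarAddCircle (T := T)) :=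
    unimodularMul (𝕜 := ℂ) (fourier n).continuous.aestronglyMeasurable
      (.of_forall fun x => by rw [fourier_apply, Circle.norm_coe])
  have htwist : twist (star g) =ᵐ[haarAddCircle] fun x => fourier n x * conj (g x) := by
    filter_upwards [coeFn_unimodularMul (𝕜 := ℂ) _ _ (star g), Lp.coeFn_star g] with x hx hstar
    rw [hx, hstar, smul_eq_mul, Pi.star_apply, RCLike.star_def]
  have hleft (i : ℤ) : inner ℂ (twist (star g)) (fourierBasis i) = fourierCoeff g (n - i) := by
    rw [L2.inner_def, fourierCoeff]
    refine integral_congr_ae ?_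
    filter_upwards [htwist, coeFn_fourierBasis i] with x hx hi
    rw [RCLike.inner_apply, hx, hi, map_mul, conj_conj, ← fourier_neg, smul_eq_mul,
      neg_sub, sub_eq_add_neg, fourier_add, mul_assoc]
  have hright (i : ℤ) : inner ℂ (fourierBasis i) f = fourierCoeff f i := by
    rw [← fourierBasis_repr, HilbertBasis.repr_apply_apply]
  have hinner : inner ℂ (twist (star g)) f = fourierCoeff (fun x => f x * g x) n := by
    rw [L2.inner_def, fourierCoeff]
    refine integral_congr_ae ?_
    filter_upwards [htwist] with x hx
    rw [RCLike.inner_apply, hx, map_mul, conj_conj, ← fourier_neg, smul_eq_mul]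
    ring
  simpa only [hleft, hright, hinner, mul_comm] using
    fourierBasis.hasSum_inner_mul_inner (twist (star g)) f

theorem mul_mem_hardySpace (hf : f ∈ hardySpace T) (hg : g ∈ hardySpace T)
    (hfg : h =ᵐ[haarAddCircle] fun x => f x * g x) : h ∈ hardySpace T := by
  rw [mem_hardySpace_iff] at *
  intro n hn
  rw [fourierCoeff_congr_ae hfg]
  refine (hasSum_fourierCoeff_mul_fourierCoeff f g n).unique ?_
  convert hasSum_zero using 2 with i
  rcases lt_or_ge i 0 with hi | hi
  · rw [hf i hi, zero_mul]
  · rw [hg (n - i) (by lia), mul_zero]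

theorem fourierCoeff_mul_eq_sum_antidiagonal (hf : f ∈ hardySpace T) (hg : g ∈ hardySpace T)
    (n : ℕ) :
    fourierCoeff (fun x => f x * g x) n =
      ∑ kl ∈ Finset.HasAntidiagonal.antidiagonal n, fourierCoeff f kl.1 * fourierCoeff g kl.2 := by
  rw [mem_hardySpace_iff] at hf hg
  have hzero : ∀ i ∉ (Finset.range (n + 1)).map Nat.castEmbedding,
      fourierCoeff f i * fourierCoeff g (n - i) = 0 := by
    intro i hi
    rcases lt_or_ge i 0 with hneg | hnonneg
    · rw [hf i hneg, zero_mul]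
    · lift i to ℕ using hnonneg
      have hin : n < i := by simpa using hi
      rw [hg _ (by lia), mul_zero]
  rw [(hasSum_fourierCoeff_mul_fourierCoeff f g n).unique (hasSum_sum_of_ne_finset_zero hzero),
    Finset.sum_map, Finset.Nat.sum_antidiagonal_eq_sum_range_succ_mk]
  refine Finset.sum_congr rfl fun i hi => ?_
  rw [Nat.castEmbedding_apply, Nat.cast_sub (Finset.mem_range_succ_iff.1 hi)]

theorem extDisk_mul (hf : f ∈ hardySpace T) (hg : g ∈ hardySpace T)
    (hfg : h =ᵐ[haarAddCircle] fun x => f x * g x) (hz : ‖z‖ < 1) :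
    extDisk T h z = extDisk T f z * extDisk T g z := by
  simp only [extDisk_eq_tsum_fourierCoeff]
  rw [tsum_mul_tsum_eq_tsum_sum_antidiagonal_of_summable_norm
    (summable_norm_fourierCoeff_mul_pow f hz) (summable_norm_fourierCoeff_mul_pow g hz)]
  congr 1 with n
  rw [fourierCoeff_congr_ae hfg, fourierCoeff_mul_eq_sum_antidiagonal hf hg, Finset.sum_mul]
  refine Finset.sum_congr rfl fun kl hkl => ?_
  rw [← Finset.HasAntidiagonal.mem_antidiagonal.1 hkl, pow_add]
  ring

end HardySpace

namespace IsInner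

variable {T : ℝ} [Fact (0 < T)] {θ : Lp ℂ 2 (haarAddCircle (T := T))} {a b z : ℂ}

/-- Multiplication by an inner function, as a linear isometry of `L²` of the circle. -/
def mulLeft (hθ : IsInner T θ) :
    Lp ℂ 2 (haarAddCircle (T := T)) →ₗᵢ[ℂ] Lp ℂ 2 (haarAddCircle (T := T)) :=
  unimodularMul (Lp.aestronglyMeasurable θ) hθ.2

theorem coeFn_mulLeft (hθ : IsInner T θ) (f : Lp ℂ 2 (haarAddCircle (T := T))) :
    hθ.mulLeft f =ᵐ[haarAddCircle] fun x => θ x * f x :=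
  coeFn_unimodularMul (Lp.aestronglyMeasurable θ) hθ.2 f

theorem coeFn_sub_smul_mulLeft (hθ : IsInner T θ) (b : ℂ)
    (f : Lp ℂ 2 (haarAddCircle (T := T))) :
    (f - b • hθ.mulLeft f : Lp ℂ 2 (haarAddCircle (T := T))) =ᵐ[haarAddCircle]
      fun x => (1 - b * θ x) * f x := by
  filter_upwards [Lp.coeFn_sub f (b • hθ.mulLeft f), Lp.coeFn_smul b (hθ.mulLeft f),
    hθ.coeFn_mulLeft f] with x hsub hsmul hmul
  rw [hsub, Pi.sub_apply, hsmul, Pi.smul_apply, hmul, smul_eq_mul]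
  ring

theorem coeFn_mulLeft_sub_smul (hθ : IsInner T θ) (a : ℂ)
    (f : Lp ℂ 2 (haarAddCircle (T := T))) :
    (hθ.mulLeft f - a • f : Lp ℂ 2 (haarAddCircle (T := T))) =ᵐ[haarAddCircle]
      fun x => (θ x - a) * f x := by
  filter_upwards [Lp.coeFn_sub (hθ.mulLeft f) (a • f), Lp.coeFn_smul a f,
    hθ.coeFn_mulLeft f] with x hsub hsmul hmul
  rw [hsub, Pi.sub_apply, hsmul, Pi.smul_apply, hmul, smul_eq_mul]
  ring

theorem mulLeft_fourierBasis_zero (hθ : IsInner T θ) : hθ.mulLeft (fourierBasis 0) = θ := by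
  refine Lp.ext ?_
  filter_upwards [hθ.coeFn_mulLeft (fourierBasis 0), coeFn_fourierBasis 0] with x hmul hone
  rw [hmul, hone, fourier_zero, mul_one]

theorem mulLeft_mem_hardySpace (hθ : IsInner T θ) :
    ∀ f ∈ hardySpace T, hθ.mulLeft f ∈ hardySpace T := fun f hf =>
  mul_mem_hardySpace hθ.1 hf (hθ.coeFn_mulLeft f)

theorem sub_smul_mulLeft_mem_hardySpace_iff (hθ : IsInner T θ) (hb : ‖b‖ < 1)
    {u : Lp ℂ 2 (haarAddCircle (T := T))} :
    u - b • hθ.mulLeft u ∈ hardySpace T ↔ u ∈ hardySpace T :=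
  sub_smul_map_mem_iff isClosed_hardySpace hθ.mulLeft_mem_hardySpace hb

theorem thetaH2_eq_map (hθ : IsInner T θ) :
    thetaH2 T θ = (hardySpace T).map hθ.mulLeft.toLinearMap := by
  ext g
  constructor
  · rintro ⟨f, hf, hg⟩
    exact ⟨f, hf, Lp.ext ((hθ.coeFn_mulLeft f).trans hg.symm)⟩
  · rintro ⟨f, hf, rfl⟩
    exact ⟨f, hf, hθ.coeFn_mulLeft f⟩

theorem modelSpace_eq (hθ : IsInner T θ) :
    modelSpace T θ = hardySpace T ⊓ ((hardySpace T).map hθ.mulLeft.toLinearMap)ᗮ := by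
  rw [modelSpace, hθ.thetaH2_eq_map]

theorem extDisk_sub_smul_mulLeft (hθ : IsInner T θ) {f : Lp ℂ 2 (haarAddCircle (T := T))}
    (hf : f ∈ hardySpace T) (b : ℂ) (hz : ‖z‖ < 1) :
    extDisk T (f - b • hθ.mulLeft f) z = (1 - b * extDisk T θ z) * extDisk T f z := by
  rw [extDisk_sub _ _ hz, extDisk_smul, extDisk_mul hθ.1 hf (hθ.coeFn_mulLeft f) hz]
  ring

/-- The constant function `1` is `(1 - b * θ) * u` for some `u` in `H²`; evaluate at `z`. -/
theorem one_sub_mul_extDisk_ne_zero (hθ : IsInner T θ) (hb : ‖b‖ < 1) (hz : ‖z‖ < 1) :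
    1 - b * extDisk T θ z ≠ 0 := by
  obtain ⟨u, hu⟩ := exists_sub_smul_map_eq hθ.mulLeft hb (fourierBasis ((0 : ℕ) : ℤ))
  have hu_mem : u ∈ hardySpace T :=
    (hθ.sub_smul_mulLeft_mem_hardySpace_iff hb).1 (hu ▸ fourierBasis_mem_hardySpace 0)
  have heval := hθ.extDisk_sub_smul_mulLeft hu_mem b hz
  rw [hu, extDisk_fourierBasis, pow_zero] at heval
  exact left_ne_zero_of_mul_eq_one heval.symm

section FrostmanShift

variable {Θ : Lp ℂ 2 (haarAddCircle (T := T))}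

theorem frostmanShift_sub_smul_mulLeft (hθ : IsInner T θ) (ha : ‖a‖ < 1)
    (hΘ : Θ =ᵐ[haarAddCircle] fun x => frostmanMap a (θ x)) :
    Θ - conj a • hθ.mulLeft Θ = θ - a • fourierBasis 0 := by
  nth_rw 2 [← hθ.mulLeft_fourierBasis_zero]
  refine Lp.ext ?_
  filter_upwards [hθ.coeFn_sub_smul_mulLeft (conj a) Θ,
    hθ.coeFn_mulLeft_sub_smul a (fourierBasis 0), coeFn_fourierBasis 0, hΘ, hθ.2]
    with x hleft hright hone hΘx hnorm
  rw [hleft, hright, hone, hΘx, fourier_zero, mul_one, frostmanMap,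
    mul_div_cancel₀ _ (one_sub_conj_mul_ne_zero ha hnorm)]

theorem frostmanShift (hθ : IsInner T θ) (ha : ‖a‖ < 1)
    (hΘ : Θ =ᵐ[haarAddCircle] fun x => frostmanMap a (θ x)) : IsInner T Θ := by
  refine ⟨?_, ?_⟩
  · rw [← hθ.sub_smul_mulLeft_mem_hardySpace_iff (b := conj a) (by rwa [RCLike.norm_conj]),
      hθ.frostmanShift_sub_smul_mulLeft ha hΘ]
    exact sub_mem hθ.1 (Submodule.smul_mem _ a (fourierBasis_mem_hardySpace 0))
  · filter_upwards [hΘ, hθ.2] with x hΘx hnorm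
    rw [hΘx, norm_frostmanMap_of_norm_eq_one ha hnorm]

theorem extDisk_frostmanShift (hθ : IsInner T θ) (ha : ‖a‖ < 1)
    (hΘ : Θ =ᵐ[haarAddCircle] fun x => frostmanMap a (θ x)) (hz : ‖z‖ < 1) :
    extDisk T Θ z = frostmanMap a (extDisk T θ z) := by
  have hne : 1 - conj a * extDisk T θ z ≠ 0 :=
    hθ.one_sub_mul_extDisk_ne_zero (by rwa [RCLike.norm_conj]) hz
  have hone : extDisk T (fourierBasis 0) z = 1 := extDisk_fourierBasis 0 z
  have heval := hθ.extDisk_sub_smul_mulLeft (hθ.frostmanShift ha hΘ).1 (conj a) hz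
  rw [hθ.frostmanShift_sub_smul_mulLeft ha hΘ, extDisk_sub _ _ hz, extDisk_smul, hone,
    mul_one] at heval
  rw [frostmanMap, heval, mul_div_cancel_left₀ _ hne]

theorem mulLeft_frostmanShift_sub_smul_mulLeft (hθ : IsInner T θ) (hΘ_inner : IsInner T Θ)
    (ha : ‖a‖ < 1) (hΘ : Θ =ᵐ[haarAddCircle] fun x => frostmanMap a (θ x))
    (f : Lp ℂ 2 (haarAddCircle (T := T))) :
    hΘ_inner.mulLeft (f - conj a • hθ.mulLeft f) = hθ.mulLeft f - a • f := by
  refine Lp.ext ?_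
  filter_upwards [hΘ_inner.coeFn_mulLeft (f - conj a • hθ.mulLeft f),
    hθ.coeFn_sub_smul_mulLeft (conj a) f, hθ.coeFn_mulLeft_sub_smul a f, hΘ, hθ.2]
    with x hmul hleft hright hΘx hnorm
  rw [hmul, hleft, hright, hΘx, frostmanMap, ← mul_assoc,
    div_mul_cancel₀ _ (one_sub_conj_mul_ne_zero ha hnorm)]

theorem sub_smul_mulLeft_mem_modelSpace_iff (hθ : IsInner T θ) (ha : ‖a‖ < 1)
    (hΘ : Θ =ᵐ[haarAddCircle] fun x => frostmanMap a (θ x))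
    {u : Lp ℂ 2 (haarAddCircle (T := T))} :
    u - conj a • hθ.mulLeft u ∈ modelSpace T θ ↔ u ∈ modelSpace T Θ := by
  have hΘ_inner := hθ.frostmanShift ha hΘ
  rw [hθ.modelSpace_eq, hΘ_inner.modelSpace_eq]
  exact sub_smul_map_mem_inf_orthogonal_iff isClosed_hardySpace hθ.mulLeft_mem_hardySpace ha
    (hθ.mulLeft_frostmanShift_sub_smul_mulLeft hΘ_inner ha hΘ)

theorem norm_sub_smul_mulLeft_of_mem_modelSpace (hθ : IsInner T θ) (hb : ‖b‖ < 1)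
    {u : Lp ℂ 2 (haarAddCircle (T := T))} (hu : u - b • hθ.mulLeft u ∈ modelSpace T θ) :
    ‖u - b • hθ.mulLeft u‖ = Real.sqrt (1 - ‖b‖ ^ 2) * ‖u‖ := by
  have hu_mem : u ∈ hardySpace T := (hθ.sub_smul_mulLeft_mem_hardySpace_iff hb).1 hu.1
  exact norm_sub_smul_map_of_inner_eq_zero hθ.mulLeft
    ((Submodule.mem_orthogonal _ _).1 hu.2 _ ⟨u, hu_mem, hθ.coeFn_mulLeft u⟩)

end FrostmanShift

end IsInner

section CrofootTransform

variable {T : ℝ} [Fact (0 < T)] {θ Θ : Lp ℂ 2 (haarAddCircle (T := T))} {a : ℂ}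
  {J : Lp ℂ 2 (haarAddCircle (T := T)) →ₗ[ℂ] Lp ℂ 2 (haarAddCircle (T := T))}

/-- `J` is the Crofoot transform with parameter `a`: multiplication by
`√(1 - |a|²) / (1 - conj a * θ)` on `L²` of the circle. -/
def IsCrofootTransform (θ : Lp ℂ 2 (haarAddCircle (T := T))) (a : ℂ)
    (J : Lp ℂ 2 (haarAddCircle (T := T)) →ₗ[ℂ] Lp ℂ 2 (haarAddCircle (T := T))) : Prop :=
  ∀ f, J f =ᵐ[haarAddCircle] fun x =>
    (Real.sqrt (1 - ‖a‖ ^ 2) : ℂ) / (1 - conj a * θ x) * f x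

namespace IsCrofootTransform

theorem apply_sub_smul_mulLeft (hJ : IsCrofootTransform θ a J) (hθ : IsInner T θ) (ha : ‖a‖ < 1)
    (u : Lp ℂ 2 (haarAddCircle (T := T))) :
    J (u - conj a • hθ.mulLeft u) = (Real.sqrt (1 - ‖a‖ ^ 2) : ℂ) • u := by
  refine Lp.ext ?_
  filter_upwards [hJ (u - conj a • hθ.mulLeft u), hθ.coeFn_sub_smul_mulLeft (conj a) u,
    Lp.coeFn_smul (Real.sqrt (1 - ‖a‖ ^ 2) : ℂ) u, hθ.2] with x hJx hsub hsmul hnorm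
  rw [hJx, hsub, hsmul, Pi.smul_apply, smul_eq_mul, ← mul_assoc,
    div_mul_cancel₀ _ (one_sub_conj_mul_ne_zero ha hnorm)]

theorem apply_mem_modelSpace (hJ : IsCrofootTransform θ a J) (hθ : IsInner T θ)
    (ha : ‖a‖ < 1) (hΘ : Θ =ᵐ[haarAddCircle] fun x => frostmanMap a (θ x))
    {f : Lp ℂ 2 (haarAddCircle (T := T))} (hf : f ∈ modelSpace T θ) : J f ∈ modelSpace T Θ := by
  obtain ⟨u, rfl⟩ :=
    exists_sub_smul_map_eq hθ.mulLeft (b := conj a) (by rwa [RCLike.norm_conj]) f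
  rw [hJ.apply_sub_smul_mulLeft hθ ha]
  exact Submodule.smul_mem _ _ ((hθ.sub_smul_mulLeft_mem_modelSpace_iff ha hΘ).1 hf)

theorem norm_apply_of_mem_modelSpace (hJ : IsCrofootTransform θ a J) (hθ : IsInner T θ)
    (ha : ‖a‖ < 1) {f : Lp ℂ 2 (haarAddCircle (T := T))} (hf : f ∈ modelSpace T θ) :
    ‖J f‖ = ‖f‖ := by
  have hca : ‖conj a‖ < 1 := by rwa [RCLike.norm_conj]
  obtain ⟨u, rfl⟩ := exists_sub_smul_map_eq hθ.mulLeft hca f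
  rw [hJ.apply_sub_smul_mulLeft hθ ha, hθ.norm_sub_smul_mulLeft_of_mem_modelSpace hca hf,
    norm_smul, RCLike.norm_conj, norm_real, Real.norm_of_nonneg (Real.sqrt_nonneg _)]

theorem exists_mem_modelSpace_eq (hJ : IsCrofootTransform θ a J) (hθ : IsInner T θ)
    (ha : ‖a‖ < 1) (hΘ : Θ =ᵐ[haarAddCircle] fun x => frostmanMap a (θ x))
    {g : Lp ℂ 2 (haarAddCircle (T := T))} (hg : g ∈ modelSpace T Θ) :
    ∃ f ∈ modelSpace T θ, J f = g := by
  refine ⟨(Real.sqrt (1 - ‖a‖ ^ 2) : ℂ)⁻¹ • (g - conj a • hθ.mulLeft g),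
    Submodule.smul_mem _ _ ((hθ.sub_smul_mulLeft_mem_modelSpace_iff ha hΘ).2 hg), ?_⟩
  rw [map_smul, hJ.apply_sub_smul_mulLeft hθ ha, inv_smul_smul₀ (sqrt_one_sub_norm_sq_ne_zero ha)]

theorem apply_reproducingKernel (hJ : IsCrofootTransform θ a J) (hθ : IsInner T θ)
    (ha : ‖a‖ < 1) (hΘ : Θ =ᵐ[haarAddCircle] fun x => frostmanMap a (θ x)) {z : ℂ}
    (hz : ‖z‖ < 1) {k kΘ : Lp ℂ 2 (haarAddCircle (T := T))}
    (hk : k =ᵐ[haarAddCircle] fun x =>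
      (1 - conj (extDisk T θ z) * θ x) / (1 - conj z * fourier 1 x))
    (hkΘ : kΘ =ᵐ[haarAddCircle] fun x =>
      (1 - conj (extDisk T Θ z) * Θ x) / (1 - conj z * fourier 1 x)) :
    J k = ((1 - a * conj (extDisk T θ z)) / (Real.sqrt (1 - ‖a‖ ^ 2) : ℂ)) • kΘ := by
  have hDz : 1 - conj a * extDisk T θ z ≠ 0 :=
    hθ.one_sub_mul_extDisk_ne_zero (by rwa [RCLike.norm_conj]) hz
  have hDz' : 1 - conj (extDisk T θ z) * a ≠ 0 := by
    simpa [mul_comm] using (map_ne_zero conj).2 hDz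
  have hs := sqrt_one_sub_norm_sq_ne_zero ha
  refine Lp.ext ?_
  filter_upwards [hJ k, hk, hkΘ, hΘ, hθ.2, Lp.coeFn_smul
    ((1 - a * conj (extDisk T θ z)) / (Real.sqrt (1 - ‖a‖ ^ 2) : ℂ)) kΘ]
    with x hJx hkx hkΘx hΘx hnorm hsmul
  have hDx := one_sub_conj_mul_ne_zero ha hnorm
  rw [hJx, hkx, hsmul, Pi.smul_apply, smul_eq_mul, hkΘx, hΘx, hθ.extDisk_frostmanShift ha hΘ hz,
    one_sub_conj_frostmanMap_mul_frostmanMap hDz hDx, ← sq_sqrt_one_sub_norm_sq ha]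
  field_simp

end IsCrofootTransform

end CrofootTransform

theorem stmt16_general {T : ℝ} [Fact (0 < T)] {θ Θ : Lp ℂ 2 (haarAddCircle (T := T))}
    (hθ : IsInner T θ) {a : ℂ} (ha : ‖a‖ < 1)
    (hΘ : Θ =ᵐ[haarAddCircle] fun x => frostmanMap a (θ x))
    {J : Lp ℂ 2 (haarAddCircle (T := T)) →ₗ[ℂ] Lp ℂ 2 (haarAddCircle (T := T))}
    (hJ : IsCrofootTransform θ a J) :
    IsInner T Θ ∧ (∀ z : ℂ, ‖z‖ < 1 → extDisk T Θ z = frostmanMap a (extDisk T θ z)) ∧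
    (∀ f ∈ modelSpace T θ, J f ∈ modelSpace T Θ ∧ ‖J f‖ = ‖f‖) ∧
    (∀ g ∈ modelSpace T Θ, ∃ f ∈ modelSpace T θ, J f = g) ∧
    (∀ z : ℂ, ‖z‖ < 1 → ∀ k kΘ : Lp ℂ 2 (haarAddCircle (T := T)),
      (k =ᵐ[haarAddCircle] fun x =>
        (1 - conj (extDisk T θ z) * θ x) / (1 - conj z * fourier 1 x)) →
      (kΘ =ᵐ[haarAddCircle] fun x =>
        (1 - conj (extDisk T Θ z) * Θ x) / (1 - conj z * fourier 1 x)) →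
      J k = ((1 - a * conj (extDisk T θ z)) / (Real.sqrt (1 - ‖a‖ ^ 2) : ℂ)) • kΘ) :=
  ⟨hθ.frostmanShift ha hΘ, fun _ hz => hθ.extDisk_frostmanShift ha hΘ hz,
    fun _ hf => ⟨hJ.apply_mem_modelSpace hθ ha hΘ hf, hJ.norm_apply_of_mem_modelSpace hθ ha hf⟩,
    fun _ hg => hJ.exists_mem_modelSpace_eq hθ ha hΘ hg,
    fun _ hz _ _ hk hkΘ => hJ.apply_reproducingKernel hθ ha hΘ hz hk hkΘ⟩

/-- The Frostman shift `Θ = (θ - θ(0))/(1 - conj(θ(0))θ)` of an inner function `θ` is inner with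
`Θ(0) = 0`, and the Crofoot transform `J : f ↦ (√(1-|θ(0)|²)/(1 - conj(θ(0))θ)) f` is a unitary
map of `K_θ` onto `K_Θ` with `J k_λ = ((1 - θ(0)conj(θ(λ)))/√(1-|θ(0)|²)) k_λ^Θ`. -/
theorem stmt16 (T : ℝ) [hT : Fact (0 < T)] (θ : Lp ℂ 2 (@haarAddCircle T hT))
    (hθ : IsInner T θ) (hθ00 : ‖extDisk T θ 0‖ < 1)
    (Θ : Lp ℂ 2 (@haarAddCircle T hT))
    (hΘ : (Θ : AddCircle T → ℂ) =ᵐ[@haarAddCircle T hT] fun x =>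
      ((θ : AddCircle T → ℂ) x - extDisk T θ 0) /
        (1 - conj (extDisk T θ 0) * (θ : AddCircle T → ℂ) x))
    (J : Lp ℂ 2 (@haarAddCircle T hT) →ₗ[ℂ] Lp ℂ 2 (@haarAddCircle T hT))
    (hJ : ∀ f : Lp ℂ 2 (@haarAddCircle T hT),
      ((J f : Lp ℂ 2 (@haarAddCircle T hT)) : AddCircle T → ℂ) =ᵐ[@haarAddCircle T hT]
        fun x => ((Real.sqrt (1 - ‖extDisk T θ 0‖ ^ 2) : ℂ) /
          (1 - conj (extDisk T θ 0) * (θ : AddCircle T → ℂ) x)) * (f : AddCircle T → ℂ) x) :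
    IsInner T Θ ∧ extDisk T Θ 0 = 0 ∧
    (∀ f ∈ modelSpace T θ, J f ∈ modelSpace T Θ ∧ ‖J f‖ = ‖f‖) ∧
    (∀ g ∈ modelSpace T Θ, ∃ f ∈ modelSpace T θ, J f = g) ∧
    (∀ lam : ℂ, ‖lam‖ < 1 →
      ∀ klam klamΘ : Lp ℂ 2 (@haarAddCircle T hT),
        ((klam : AddCircle T → ℂ) =ᵐ[@haarAddCircle T hT] fun x =>
          (1 - conj (extDisk T θ lam) * (θ : AddCircle T → ℂ) x) /
            (1 - conj lam * fourier 1 x)) →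
        ((klamΘ : AddCircle T → ℂ) =ᵐ[@haarAddCircle T hT] fun x =>
          (1 - conj (extDisk T Θ lam) * (Θ : AddCircle T → ℂ) x) /
            (1 - conj lam * fourier 1 x)) →
        J klam = ((1 - extDisk T θ 0 * conj (extDisk T θ lam)) /
          (Real.sqrt (1 - ‖extDisk T θ 0‖ ^ 2) : ℂ)) • klamΘ) := by
  obtain ⟨hinner, hext, hunitary⟩ := stmt16_general hθ hθ00 hΘ hJ
  exact ⟨hinner, by rw [hext 0 (by simp), frostmanMap, sub_self, zero_div], hunitary⟩

end
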